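/- arXiv:2003.08614 — 2 statements merged into one kernel-verified Lean document; each statement's English description precedes it below -/
import Mathlib

section
/- For all integers k ≥ 2 and n ≥ 1, every probability vector p with all p_i > 0, every real t > 0, and every real λ with 0 ≤ λ ≤ 1, the tail probability satisfies P(n·D(p̂‖p) > t) ≤ exp(−λt) · G_{k,n}(λ); in particular P(n·D(p̂‖p) > t) ≤ min_{λ ∈ [0,1]} exp(−λt) · G_{k,n}(λ). -/
/-!
The bound is the exponential Markov inequality combined with an exact evaluation. Markov gives
`P(n D > t) ≤ exp(-λ t) φ(λ, p)` with `φ(λ, p) = E exp(λ n D)` (`tailP_le_phi`). Each summand of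
`φ` is a multinomial coefficient times `∏ ((Xᵢ/n)^λ pᵢ^(1-λ))^Xᵢ`, so weighted AM-GM bounds `φ`
by `Gfun`, the same sum with `λ Xᵢ/n + (1-λ) pᵢ` as bases (`phi_le_Gfun`).

It remains to see that `Gfun = Gpoly`, whatever `p` is (`Gfun_eq_Gpoly`). With `a = λ/n` and
`bᵢ = (1-λ) pᵢ`, `Gfun` is `n!` times the iterated convolution of the sequences
`x ↦ (bᵢ + a x)^x / x!`. The convolution of two of them is
`∑ a^m (b + c + a N)^(N-m) / (N-m)!` (`abel_convolution`): the second factor is expanded around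
`s = b + c + a N`, and the coefficients are `M`-th finite differences of polynomials of degree
`M`. Induction on the number of factors (`abelCoeff_succ`, `sum_prod_eq_abelCoeff`) then yields
the coefficient of `w^n` in `exp ((∑ bᵢ + a n) w) / (1 - a w)^(k-1)`, and
`∑ bᵢ + a n = (1 - λ) + λ = 1`.
-/

open Finset

/-- The polynomial `G_{k,n}(λ) = ∑_{m=0}^n (n!/(n^m (n-m)!)) C(m+k-2, k-2) λ^m`. -/
noncomputable def Gpoly (k n : ℕ) (l : ℝ) : ℝ :=
  ∑ m ∈ Finset.range (n + 1),
    (Nat.factorial n : ℝ) / ((n : ℝ) ^ m * (Nat.factorial (n - m) : ℝ)) *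
      (Nat.choose (m + k - 2) (k - 2) : ℝ) * l ^ m
/-- `G_{k,n}(λ, p)`: sum over tuples of nonnegative integers summing to `n` of the
multinomial coefficient times `∏ i (λ Xᵢ/n + (1-λ) pᵢ)^{Xᵢ}` (with `0^0 = 1`). -/
noncomputable def Gfun (k n : ℕ) (l : ℝ) (p : Fin k → ℝ) : ℝ :=
  ∑ X ∈ Finset.Nat.antidiagonalTuple k n,
    (Nat.multinomial Finset.univ X : ℝ) *
      ∏ i, (l * (X i : ℝ) / (n : ℝ) + (1 - l) * p i) ^ (X i)
/-- Multinomial probability of the tuple of counts `X` under probability vector `p`. -/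
noncomputable def multP (k : ℕ) (p : Fin k → ℝ) (X : Fin k → ℕ) : ℝ :=
  (Nat.multinomial Finset.univ X : ℝ) * ∏ i, p i ^ (X i)

/-- Relative entropy `D(p̂ ‖ p)` of the empirical distribution `X/n` w.r.t. `p`
(with the convention `0 · log 0 = 0`, automatic since `Real.log 0 = 0`). -/
noncomputable def relEnt (k n : ℕ) (p : Fin k → ℝ) (X : Fin k → ℕ) : ℝ :=
  ∑ i, ((X i : ℝ) / (n : ℝ)) * Real.log ((X i : ℝ) / ((n : ℝ) * p i))

/-- Moment generating function `φ_{k,n}(λ, p) = E exp(λ n D(p̂‖p))`. -/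
noncomputable def phi (k n : ℕ) (l : ℝ) (p : Fin k → ℝ) : ℝ :=
  ∑ X ∈ Finset.Nat.antidiagonalTuple k n,
    multP k p X * Real.exp (l * (n : ℝ) * relEnt k n p X)

open scoped Classical in
/-- Tail probability `P(n D(p̂‖p) > t)`. -/
noncomputable def tailP (k n : ℕ) (p : Fin k → ℝ) (t : ℝ) : ℝ :=
  ∑ X ∈ (Finset.Nat.antidiagonalTuple k n).filter
      (fun X => t < (n : ℝ) * relEnt k n p X),
    multP k p X

/-! ### An Abel-type convolution identity -/

/-- The `M`-th finite difference of the polynomial `(b + a x)^M`, with the binomial coefficients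
written through factorials and divided by `M!`. -/
lemma sum_finite_diff (a b : ℝ) (M : ℕ) :
    ∑ x ∈ antidiagonal M, (-1 : ℝ) ^ x.2 * (b + a * x.1) ^ M /
      ((x.1.factorial : ℝ) * x.2.factorial) = a ^ M := by
  have hterm : ∀ g : ℕ → ℝ, ∑ x ∈ antidiagonal M, (-1 : ℝ) ^ x.2 * g x.1 /
      ((x.1.factorial : ℝ) * x.2.factorial) = (∑ x ∈ range (M + 1),
        ((-1 : ℤ) ^ (M - x) * M.choose x) • g x) / M.factorial := by
    intro g
    rw [Nat.sum_antidiagonal_eq_sum_range_succ_mk, Finset.sum_div]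
    refine Finset.sum_congr rfl fun x hx => ?_
    have hx' : x ≤ M := by simpa [Nat.lt_succ_iff] using hx
    rw [zsmul_eq_mul]
    push_cast
    rw [Nat.cast_choose ℝ hx']
    field_simp
  rw [hterm (fun x => (b + a * x) ^ M)]
  rcases eq_or_ne a 0 with rfl | ha
  · -- For `a = 0` the sum is an alternating sum of binomial coefficients.
    rcases Nat.eq_zero_or_pos M with rfl | hM
    · simp
    · have h := fwdDiff_iter_eq_sum_shift (1 : ℝ) (fun _ : ℝ => b ^ M) M 0
      have h0 : (fwdDiff (1 : ℝ))^[M] (fun _ : ℝ => b ^ M) 0 = 0 := by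
        obtain ⟨m, rfl⟩ := Nat.exists_eq_succ_of_ne_zero hM.ne'
        have := congrFun (fwdDiff_iter_pow_eq_zero_of_lt (R := ℝ) (Nat.succ_pos m)) 0
        rw [fwdDiff_iter_eq_sum_shift] at this ⊢
        simp only [pow_zero, zsmul_eq_mul, mul_one, Pi.zero_apply] at this ⊢
        rw [← Finset.sum_mul, this, zero_mul]
      rw [h0] at h
      simp only [zero_mul, add_zero]
      rw [← h, zero_div, zero_pow hM.ne']
  · have h := congrFun (fwdDiff_iter_eq_factorial (R := ℝ) (n := M)) (b / a)
    rw [fwdDiff_iter_eq_sum_shift] at h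
    have h2 : ∑ x ∈ range (M + 1), ((-1 : ℤ) ^ (M - x) * M.choose x) • (b + a * (x : ℝ)) ^ M
        = a ^ M * M.factorial := by
      have h' : ((M.factorial : ℝ → ℝ) (b / a)) = (M.factorial : ℝ) := rfl
      rw [h'] at h
      rw [← h, Finset.mul_sum]
      refine Finset.sum_congr rfl fun x _ => ?_
      rw [mul_smul_comm, ← mul_pow]
      congr 2
      simp only [nsmul_eq_mul, mul_one]
      field_simp
    rw [h2]
    have := Nat.factorial_ne_zero M
    field_simp

/-- Reassociation of a sum over triples of natural numbers with sum `n`. -/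
lemma sum_triple_assoc (n : ℕ) (f : ℕ → ℕ → ℕ → ℝ) :
    ∑ q ∈ antidiagonal n, ∑ r ∈ antidiagonal q.2, f q.1 r.1 r.2 =
      ∑ q ∈ antidiagonal n, ∑ r ∈ antidiagonal q.1, f r.1 r.2 q.2 := by
  rw [Finset.sum_sigma', Finset.sum_sigma']
  refine Finset.sum_nbij' (fun x => ⟨(x.1.1 + x.2.1, x.2.2), (x.1.1, x.2.1)⟩)
    (fun x => ⟨(x.2.1, x.2.2 + x.1.2), (x.2.2, x.1.2)⟩) ?_ ?_ ?_ ?_ ?_ <;>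
  · rintro ⟨⟨_, _⟩, ⟨_, _⟩⟩ h
    simp only [mem_sigma, HasAntidiagonal.mem_antidiagonal] at h ⊢
    try grind

lemma sum_triple_left_comm (n : ℕ) (f : ℕ → ℕ → ℕ → ℝ) :
    ∑ q ∈ antidiagonal n, ∑ r ∈ antidiagonal q.2, f q.1 r.1 r.2 =
      ∑ q ∈ antidiagonal n, ∑ r ∈ antidiagonal q.2, f r.1 q.1 r.2 := by
  rw [sum_triple_assoc, sum_triple_assoc n (fun x y z => f y x z)]
  refine Finset.sum_congr rfl fun q _ => ?_
  exact (Finset.Nat.sum_antidiagonal_swap (f := fun r => f r.1 r.2 q.2)).symm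

/-- The binomial theorem in exponential normalisation. -/
lemma add_pow_div_factorial (u v : ℝ) (n : ℕ) :
    (u + v) ^ n / n.factorial =
      ∑ r ∈ antidiagonal n, u ^ r.1 / r.1.factorial * (v ^ r.2 / r.2.factorial) := by
  rw [(Commute.all u v).add_pow', Finset.sum_div]
  refine Finset.sum_congr rfl fun r hr => ?_
  rw [HasAntidiagonal.mem_antidiagonal] at hr
  subst hr
  rw [nsmul_eq_mul, Nat.cast_add_choose]
  have := Nat.factorial_ne_zero (r.1 + r.2)
  field_simp

/-- Since `c + a y = s - (b + a x)` with `s = b + c + a N` whenever `x + y = N`, expanding the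
second factor in powers of `s` leaves finite differences of `(b + a x)^M` as coefficients. -/
lemma abel_convolution (a b c : ℝ) (N : ℕ) :
    ∑ q ∈ antidiagonal N, (b + a * q.1) ^ q.1 / q.1.factorial *
        ((c + a * q.2) ^ q.2 / q.2.factorial) =
      ∑ q ∈ antidiagonal N, a ^ q.1 * ((b + c + a * N) ^ q.2 / q.2.factorial) := by
  set s := b + c + a * N with hs
  let f : ℕ → ℕ → ℕ → ℝ := fun x y z => (b + a * x) ^ x / x.factorial *
    ((-(b + a * x)) ^ y / y.factorial * (s ^ z / z.factorial))
  have h1 : ∀ q ∈ antidiagonal N, (b + a * q.1) ^ q.1 / q.1.factorial *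
        ((c + a * q.2) ^ q.2 / (q.2.factorial : ℝ)) =
      ∑ r ∈ antidiagonal q.2, f q.1 r.1 r.2 := by
    intro q hq
    have hN : (N : ℝ) = q.1 + q.2 := by rw [← HasAntidiagonal.mem_antidiagonal.1 hq]; push_cast; ring
    have : c + a * q.2 = -(b + a * q.1) + s := by rw [hs, hN]; ring
    rw [this, add_pow_div_factorial _ s, Finset.mul_sum]
  rw [Finset.sum_congr rfl h1, sum_triple_assoc N f]
  refine Finset.sum_congr rfl fun q _ => ?_
  rw [← sum_finite_diff a b q.1, Finset.sum_mul]
  refine Finset.sum_congr rfl fun r hr => ?_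
  rw [← HasAntidiagonal.mem_antidiagonal.1 hr]
  simp only [f]
  rw [neg_pow (b + a * (r.1 : ℝ)), pow_add]
  field_simp

lemma sum_multichoose (j M : ℕ) :
    ∑ q ∈ antidiagonal M, (j.multichoose q.1 : ℝ) = ((j + 1).multichoose M : ℝ) := by
  rw [Nat.sum_antidiagonal_eq_sum_range_succ_mk]
  induction M with
  | zero => simp
  | succ M ih =>
    rw [Finset.sum_range_succ, ih, Nat.multichoose_succ_succ]
    push_cast
    ring

/-! ### The closed form of the multinomial sum -/

/-- The coefficient of `w^n` in `exp ((c + a n) w) / (1 - a w)^j`. -/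
noncomputable def abelCoeff (a : ℝ) (j n : ℕ) (c : ℝ) : ℝ :=
  ∑ q ∈ antidiagonal n,
    (j.multichoose q.1 : ℝ) * a ^ q.1 * ((c + a * n) ^ q.2 / q.2.factorial)

/-- Convolving with the sequence `(b + a x)^x / x!` raises the exponent `j` by one and adds `b`
to the parameter `c`. -/
lemma abelCoeff_succ (a b c : ℝ) (j n : ℕ) :
    ∑ q ∈ antidiagonal n, (b + a * q.1) ^ q.1 / q.1.factorial * abelCoeff a j q.2 c =
      abelCoeff a (j + 1) n (b + c) := by
  let f : ℕ → ℕ → ℕ → ℝ := fun x m z => (j.multichoose m : ℝ) * a ^ m *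
    ((b + a * x) ^ x / x.factorial * (((c + a * m) + a * z) ^ z / z.factorial))
  let g : ℕ → ℕ → ℕ → ℝ := fun m x z => (j.multichoose m : ℝ) * a ^ m *
    (a ^ x * ((b + c + a * n) ^ z / z.factorial))
  have h1 : ∀ q ∈ antidiagonal n,
      (b + a * q.1) ^ q.1 / q.1.factorial * abelCoeff a j q.2 c =
      ∑ r ∈ antidiagonal q.2, f q.1 r.1 r.2 := by
    intro q _
    rw [abelCoeff, Finset.mul_sum]
    refine Finset.sum_congr rfl fun r hr => ?_
    have hq : (q.2 : ℝ) = r.1 + r.2 := by rw [← HasAntidiagonal.mem_antidiagonal.1 hr]; push_cast; ring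
    have : c + a * q.2 = c + a * r.1 + a * r.2 := by rw [hq]; ring
    rw [this]
    simp only [f]
    ring
  rw [Finset.sum_congr rfl h1, sum_triple_left_comm n f]
  have h2 : ∀ q ∈ antidiagonal n,
      ∑ r ∈ antidiagonal q.2, f r.1 q.1 r.2 =
      ∑ r ∈ antidiagonal q.2, g q.1 r.1 r.2 := by
    intro q hq
    have hn : (n : ℝ) = q.1 + q.2 := by rw [← HasAntidiagonal.mem_antidiagonal.1 hq]; push_cast; ring
    have : b + c + a * n = b + (c + a * q.1) + a * q.2 := by rw [hn]; ring
    simp only [f, g]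
    rw [← Finset.mul_sum, ← Finset.mul_sum, abel_convolution, this]
  rw [Finset.sum_congr rfl h2, sum_triple_assoc n g, abelCoeff]
  refine Finset.sum_congr rfl fun q _ => ?_
  rw [← sum_multichoose, Finset.sum_mul, Finset.sum_mul]
  refine Finset.sum_congr rfl fun r hr => ?_
  rw [← HasAntidiagonal.mem_antidiagonal.1 hr, pow_add]
  ring

lemma sum_antidiagonalTuple_succ (k n : ℕ) (f : (Fin (k + 1) → ℕ) → ℝ) :
    ∑ X ∈ Finset.Nat.antidiagonalTuple (k + 1) n, f X =
      ∑ q ∈ antidiagonal n, ∑ Y ∈ Finset.Nat.antidiagonalTuple k q.2, f (Fin.cons q.1 Y) := by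
  rw [Finset.sum_sigma']
  refine Finset.sum_nbij' (fun X => ⟨(X 0, ∑ i, Fin.tail X i), Fin.tail X⟩)
    (fun x => Fin.cons x.1.1 x.2) ?_ ?_ ?_ ?_ ?_
  · intro X hX
    rw [Finset.Nat.mem_antidiagonalTuple, Fin.sum_univ_succ] at hX
    simp [Finset.Nat.mem_antidiagonalTuple, Fin.tail, hX]
  · rintro ⟨⟨x, y⟩, Y⟩ h
    simp only [mem_sigma, HasAntidiagonal.mem_antidiagonal, Finset.Nat.mem_antidiagonalTuple] at h
    simp [Finset.Nat.mem_antidiagonalTuple, Fin.sum_univ_succ, h]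
  · intro X _
    exact Fin.cons_self_tail X
  · rintro ⟨⟨x, y⟩, Y⟩ h
    simp only [mem_sigma, HasAntidiagonal.mem_antidiagonal, Finset.Nat.mem_antidiagonalTuple] at h
    simp [h]
  · intro X _
    simp

lemma sum_prod_eq_abelCoeff (a : ℝ) (k n : ℕ) (b : Fin (k + 1) → ℝ) :
    ∑ X ∈ Finset.Nat.antidiagonalTuple (k + 1) n,
      ∏ i, ((b i + a * X i) ^ X i / ((X i).factorial : ℝ)) = abelCoeff a k n (∑ i, b i) := by
  induction k generalizing n with
  | zero =>
    rw [Finset.Nat.antidiagonalTuple_one, abelCoeff,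
      Nat.sum_antidiagonal_eq_sum_range_succ_mk, Finset.sum_range_succ']
    simp
  | succ k ih =>
    rw [sum_antidiagonalTuple_succ, Fin.sum_univ_succ, ← abelCoeff_succ]
    refine Finset.sum_congr rfl fun q _ => ?_
    rw [← ih q.2 (fun i => b i.succ), Finset.mul_sum]
    refine Finset.sum_congr rfl fun Y _ => ?_
    rw [Fin.prod_univ_succ]
    simp

/-- The sum `Gfun` does not depend on `p`. -/
lemma Gfun_eq_Gpoly (k n : ℕ) (hk : 2 ≤ k) (hn : 1 ≤ n) (p : Fin k → ℝ)
    (hps : ∑ i, p i = 1) (l : ℝ) : Gfun k n l p = Gpoly k n l := by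
  obtain ⟨k, rfl⟩ := Nat.exists_eq_add_of_le' hk
  have hn0 : (n : ℝ) ≠ 0 := by positivity
  have h1 : Gfun (k + 2) n l p = n.factorial * abelCoeff (l / n) (k + 1) n (1 - l) := by
    have hb : ∑ i, (1 - l) * p i = 1 - l := by rw [← Finset.mul_sum, hps, mul_one]
    rw [← hb, ← sum_prod_eq_abelCoeff, Gfun, Finset.mul_sum]
    refine Finset.sum_congr rfl fun X hX => ?_
    rw [Finset.Nat.mem_antidiagonalTuple] at hX
    have hm : (∏ i, ((X i).factorial : ℝ)) * Nat.multinomial univ X = n.factorial := by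
      have := Nat.multinomial_spec univ X
      rw [hX] at this
      exact_mod_cast this
    have h0 : (∏ i, ((X i).factorial : ℝ)) ≠ 0 :=
      Finset.prod_ne_zero_iff.2 fun i _ => by positivity
    rw [Finset.prod_div_distrib, ← hm]
    have hprod : ∏ i, (l * (X i : ℝ) / n + (1 - l) * p i) ^ X i =
        ∏ i, ((1 - l) * p i + l / n * X i) ^ X i :=
      Finset.prod_congr rfl fun i _ => by ring
    rw [hprod, mul_comm _ (Nat.multinomial univ X : ℝ), mul_assoc, mul_div_cancel₀ _ h0]
  rw [h1, abelCoeff, Gpoly, Nat.sum_antidiagonal_eq_sum_range_succ_mk, Finset.mul_sum]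
  refine Finset.sum_congr rfl fun m _ => ?_
  have hs : 1 - l + l / n * n = 1 := by field_simp; ring
  have hc : (k + 1).multichoose m = (m + (k + 2) - 2).choose (k + 2 - 2) := by
    rw [Nat.multichoose_eq, show k + 1 + m - 1 = k + m by omega,
      show m + (k + 2) - 2 = k + m by omega, show k + 2 - 2 = k by omega]
    exact (Nat.choose_symm_add (a := k) (b := m)).symm
  simp only [hs, hc, one_pow, div_pow]
  field_simp

/-! ### The Chernoff bound -/

lemma multP_nonneg (k : ℕ) (p : Fin k → ℝ) (hp : ∀ i, 0 < p i) (X : Fin k → ℕ) :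
    0 ≤ multP k p X :=
  mul_nonneg (Nat.cast_nonneg _) (Finset.prod_nonneg fun i _ => pow_nonneg (hp i).le _)

/-- One factor of the exponential moment, bounded by weighted AM-GM applied to `x / n` and `p`
with weights `l` and `1 - l`. -/
lemma factor_le (n x : ℕ) (hn : 1 ≤ n) (p l : ℝ) (hp : 0 < p) (hl : l ∈ Set.Icc (0 : ℝ) 1) :
    p ^ x * Real.exp (l * n * ((x : ℝ) / n * Real.log (x / (n * p)))) ≤
      (l * x / n + (1 - l) * p) ^ x := by
  rcases Nat.eq_zero_or_pos x with rfl | hx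
  · simp
  have hx' : (0 : ℝ) < x := by exact_mod_cast hx
  have hn' : (0 : ℝ) < n := by exact_mod_cast hn
  have key : p * Real.exp (l * Real.log (x / (n * p))) ≤ l * x / n + (1 - l) * p := by
    have h := Real.geom_mean_le_arith_mean2_weighted hl.1 (sub_nonneg.2 hl.2)
      (div_pos hx' hn').le hp.le (by ring)
    calc p * Real.exp (l * Real.log (x / (n * p)))
        = ((x : ℝ) / n) ^ l * p ^ (1 - l) := by
          rw [Real.rpow_def_of_pos (div_pos hx' hn'), Real.rpow_def_of_pos hp, ← Real.exp_add,
            ← div_div, Real.log_div (div_pos hx' hn').ne' hp.ne']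
          nth_rewrite 1 [← Real.exp_log hp]
          rw [← Real.exp_add]
          congr 1
          ring
      _ ≤ l * (x / n) + (1 - l) * p := h
      _ = l * x / n + (1 - l) * p := by ring
  have he : Real.exp (l * n * ((x : ℝ) / n * Real.log (x / (n * p)))) =
      Real.exp (l * Real.log (x / (n * p))) ^ x := by
    rw [← Real.exp_nat_mul]
    congr 1
    field_simp
  rw [he, ← mul_pow]
  exact pow_le_pow_left₀ (by positivity) key x

lemma phi_le_Gfun (k n : ℕ) (hn : 1 ≤ n) (p : Fin k → ℝ) (hp : ∀ i, 0 < p i) (l : ℝ)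
    (hl : l ∈ Set.Icc (0 : ℝ) 1) : phi k n l p ≤ Gfun k n l p := by
  refine Finset.sum_le_sum fun X _ => ?_
  rw [multP, relEnt, Finset.mul_sum, Real.exp_sum, mul_assoc, ← Finset.prod_mul_distrib]
  refine mul_le_mul_of_nonneg_left ?_ (Nat.cast_nonneg _)
  exact Finset.prod_le_prod
    (fun i _ => mul_nonneg (pow_nonneg (hp i).le _) (Real.exp_pos _).le)
    (fun i _ => factor_le n (X i) hn (p i) l (hp i) hl)

lemma tailP_le_phi (k n : ℕ) (p : Fin k → ℝ) (hp : ∀ i, 0 < p i) (t l : ℝ) (hl : 0 ≤ l) :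
    tailP k n p t ≤ Real.exp (-(l * t)) * phi k n l p := by
  classical
  rw [phi, Finset.mul_sum, tailP]
  have hnn : ∀ X, 0 ≤ Real.exp (-(l * t)) *
      (multP k p X * Real.exp (l * (n : ℝ) * relEnt k n p X)) := fun X =>
    mul_nonneg (Real.exp_pos _).le (mul_nonneg (multP_nonneg k p hp X) (Real.exp_pos _).le)
  refine le_trans (Finset.sum_le_sum fun X hX => ?_)
    (Finset.sum_le_sum_of_subset_of_nonneg (Finset.filter_subset _ _) fun X _ _ => hnn X)
  have hX' := (Finset.mem_filter.1 hX).2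
  have h1 : 1 ≤ Real.exp (-(l * t) + l * (n : ℝ) * relEnt k n p X) := by
    apply Real.one_le_exp
    nlinarith [mul_le_mul_of_nonneg_left hX'.le hl]
  rw [Real.exp_add] at h1
  nlinarith [mul_le_mul_of_nonneg_left h1 (multP_nonneg k p hp X)]

theorem tail_le_chernoff (k n : ℕ) (hk : 2 ≤ k) (hn : 1 ≤ n)
    (p : Fin k → ℝ) (hp : ∀ i, 0 < p i) (hps : ∑ i, p i = 1)
    (t : ℝ) (ht : 0 < t) :
    ∀ l ∈ Set.Icc (0 : ℝ) 1, tailP k n p t ≤ Real.exp (-(l * t)) * Gpoly k n l := by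

  intro l hl
  refine (tailP_le_phi k n p hp t l hl.1).trans ?_
  rw [← Gfun_eq_Gpoly k n hk hn p hps l]
  exact mul_le_mul_of_nonneg_left (phi_le_Gfun k n hn p hp l hl) (Real.exp_pos _).le
end

section
/- Fix an integer k ≥ 2 and a real t > k−1, and let λ_{k,∞}(t) := 1 − (k−1)/t. If (λ_n)_{n ≥ 1} is any sequence such that each λ_n minimizes λ ↦ exp(−λt) · G_{k,n}(λ) over λ ∈ [0,1], then n · (λ_n − λ_{k,∞}(t)) → (k/(k−1)) · (t − k + 1) as n → ∞. -/
/-!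
Write `k = e + 2`, `d = e + 1 = k - 1`, `c m = C(m + e, e)` and `B n m = ∏_{j < m} (1 - j / n)`, so
that `G_{k,n}(x) = ∑_m B n m * c m * x ^ m`, a truncation of `(1 - x)^{-d} = ∑_m c m * x ^ m`.

*Consistency.* Along any ultrafilter the minimizers converge to some `x ∈ [0, 1]`. Since
`B n m → 1` for each `m` and `B n m ≤ 1`, every partial sum of `∑ c m * x ^ m` is at most
`exp ((x - a) t) (1 - a)^{-d}`, where `a = 1 - d / t`. This excludes `x = 1`, where the partial
sums are unbounded, and for `x < 1` it makes `x` a minimizer of `exp (-x t) (1 - x)^{-d}`, whose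
only minimizer is `a` by the strict inequality `r < exp (r - 1)` for `r ≠ 1`.

*Rate.* Eventually the minimizer `x = x_n` is interior, so the derivative vanishes there:
`∑ (m - t x) B n m * c m * x ^ m = 0`. Subtracting this from the closed form
`∑ (m - t x) c m * x ^ m = x t (x - a) (1 - x)^{-d-1}` gives
`n x t (x - a) (1 - x)^{-d-1} = ∑ (m - t x) * (n (1 - B n m)) * c m * x ^ m`.
As `0 ≤ n (1 - B n m) ≤ m (m - 1) / 2`, with convergence to the upper bound as `n → ∞`, dominated
convergence gives the limit of the right-hand side, which is again a negative binomial series.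
-/

open Finset

/-! ### The coefficients of `G_{k,n}` -/

/-- The falling product `∏_{j < m} (1 - j / n)`; for `n ≥ 1` and `m ≤ n` it equals
`n! / (n ^ m (n - m)!)`, and for `m > n ≥ 1` it vanishes. -/
noncomputable def fallProd (n m : ℕ) : ℝ := ∏ j ∈ Finset.range m, (1 - (j : ℝ) / n)

lemma fallProd_succ (n m : ℕ) : fallProd n (m + 1) = fallProd n m * (1 - (m : ℝ) / n) := by
  simp [fallProd, Finset.prod_range_succ]

lemma fallProd_zero (n : ℕ) : fallProd n 0 = 1 := by simp [fallProd]

lemma fallProd_eq_zero {n m : ℕ} (hn : 1 ≤ n) (h : n < m) : fallProd n m = 0 := by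
  apply Finset.prod_eq_zero (Finset.mem_range.2 h)
  have : (n : ℝ) ≠ 0 := by positivity
  simp [this]

lemma fallProd_mem {n : ℕ} (hn : 1 ≤ n) (m : ℕ) : 0 ≤ fallProd n m ∧ fallProd n m ≤ 1 := by
  induction m with
  | zero => simp [fallProd_zero]
  | succ m ih =>
    rw [fallProd_succ]
    have hn0 : (0 : ℝ) < n := by exact_mod_cast hn
    rcases le_or_gt m n with h | h
    · have h1 : (m : ℝ) / n ≤ 1 := by
        rw [div_le_one hn0]; exact_mod_cast h
      have h2 : 0 ≤ (m : ℝ) / n := by positivity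
      exact ⟨mul_nonneg ih.1 (by linarith), mul_le_one₀ ih.2 (by linarith) (by linarith)⟩
    · simp [fallProd_eq_zero hn h]

lemma fallProd_eq {n m : ℕ} (hn : 1 ≤ n) (h : m ≤ n) :
    (Nat.factorial n : ℝ) / ((n : ℝ) ^ m * (Nat.factorial (n - m) : ℝ)) = fallProd n m := by
  have hn0 : (n : ℝ) ≠ 0 := by positivity
  induction m with
  | zero =>
    have : (Nat.factorial n : ℝ) ≠ 0 := by positivity
    simp [fallProd_zero, this]
  | succ m ih =>
    rw [fallProd_succ, ← ih (by omega)]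
    obtain ⟨p, rfl⟩ := Nat.exists_eq_add_of_le h
    have e1 : m + 1 + p - (m + 1) = p := by omega
    have e2 : m + 1 + p - m = p + 1 := by omega
    rw [e1, e2, Nat.factorial_succ p]
    have h3 : (Nat.factorial p : ℝ) ≠ 0 := by positivity
    have h4 : ((p : ℝ) + 1) ≠ 0 := by positivity
    push_cast at hn0 ⊢
    field_simp
    ring

lemma descFactorial_two_cast (m : ℕ) : (m.descFactorial 2 : ℝ) = m * (m - 1) := by
  cases m with
  | zero => simp
  | succ m => simp [Nat.descFactorial]; ring

/-- The recursion in `m` behind both the bound and the limit of the defect `n (1 - B n m)`. -/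
lemma defect_succ {n : ℕ} (hn : 1 ≤ n) (m : ℕ) :
    (n : ℝ) * (1 - fallProd n (m + 1)) = n * (1 - fallProd n m) + m * fallProd n m := by
  have hn0 : (n : ℝ) ≠ 0 := by positivity
  rw [fallProd_succ]
  field_simp
  ring

lemma defect_le {n : ℕ} (hn : 1 ≤ n) (m : ℕ) :
    (n : ℝ) * (1 - fallProd n m) ≤ (m.descFactorial 2 : ℝ) / 2 := by
  rw [descFactorial_two_cast]
  induction m with
  | zero => simp [fallProd_zero]
  | succ m ih =>
    rw [defect_succ hn]
    have := mul_le_mul_of_nonneg_left (fallProd_mem hn m).2 (Nat.cast_nonneg (α := ℝ) m)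
    push_cast
    linarith

lemma fallProd_tendsto (m : ℕ) :
    Filter.Tendsto (fun n => fallProd n m) Filter.atTop (nhds 1) := by
  have : Filter.Tendsto (fun n : ℕ => ∏ j ∈ Finset.range m, (1 - (j : ℝ) / n)) Filter.atTop
      (nhds (∏ _j ∈ Finset.range m, (1 - 0 : ℝ))) :=
    tendsto_finsetProd _ fun j _ => tendsto_const_nhds.sub (tendsto_const_div_atTop_nhds_zero_nat _)
  simpa [fallProd] using this

lemma defect_tendsto (m : ℕ) :
    Filter.Tendsto (fun n : ℕ => (n : ℝ) * (1 - fallProd n m)) Filter.atTop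
      (nhds ((m.descFactorial 2 : ℝ) / 2)) := by
  rw [descFactorial_two_cast]
  induction m with
  | zero => simp [fallProd_zero]
  | succ m ih =>
    have h := ih.add ((fallProd_tendsto m).const_mul (m : ℝ))
    have e : (m : ℝ) * (m - 1) / 2 + m * 1 = ((m + 1 : ℕ) : ℝ) * (((m + 1 : ℕ) : ℝ) - 1) / 2 := by
      push_cast; ring
    rw [e] at h
    refine h.congr' ?_
    filter_upwards [Filter.eventually_ge_atTop 1] with n hn
    rw [defect_succ hn]

lemma Gpoly_eq {n : ℕ} (hn : 1 ≤ n) (e : ℕ) (x : ℝ) :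
    Gpoly (e + 2) n x =
      ∑ m ∈ Finset.range (n + 1), fallProd n m * ((m + e).choose e : ℝ) * x ^ m := by
  unfold Gpoly
  refine Finset.sum_congr rfl fun m hm => ?_
  rw [fallProd_eq hn (by simpa [Nat.lt_succ_iff] using hm)]
  rfl

/-! ### Negative binomial series -/

lemma hasSum_of_eq {f g : ℕ → ℝ} {u v : ℝ} (h : HasSum f u) (hf : ∀ m, g m = f m) (hv : v = u) :
    HasSum g v := by
  rw [funext hf, hv]
  exact h

lemma descFactorial_mul_choose (e j p : ℕ) :
    ((p + j).descFactorial j * (p + j + e).choose e : ℝ) =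
      ((e + j).factorial / e.factorial : ℝ) * ((p + (e + j)).choose (e + j) : ℝ) := by
  have h1 : ((p.factorial : ℝ)) * (p + j).descFactorial j = (p + j).factorial := by
    have := Nat.factorial_mul_descFactorial (n := p + j) (k := j) (by omega)
    rw [Nat.add_sub_cancel] at this
    exact_mod_cast this
  have h2 : ((p + j + e).choose e : ℝ) * (p + j).factorial * e.factorial
      = (p + j + e).factorial := by
    exact_mod_cast Nat.add_choose_mul_factorial_mul_factorial (p + j) e
  have h3 : ((p + (e + j)).choose (e + j) : ℝ) * p.factorial * (e + j).factorial
      = (p + (e + j)).factorial := by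
    exact_mod_cast Nat.add_choose_mul_factorial_mul_factorial p (e + j)
  have h4 : p + j + e = p + (e + j) := by omega
  have p1 : (p.factorial : ℝ) ≠ 0 := by positivity
  have p2 : (e.factorial : ℝ) ≠ 0 := by positivity
  field_simp
  apply mul_left_cancel₀ p1
  rw [h4] at h2 ⊢
  rw [← h1] at h2
  linear_combination h2 - h3

/-- The `j`-th derivative of the negative binomial series, multiplied by `x ^ j`. -/
lemma hasSum_descFactorial (e j : ℕ) {x : ℝ} (h0 : 0 ≤ x) (h1 : x < 1) :
    HasSum (fun m : ℕ => (m.descFactorial j : ℝ) * ((m + e).choose e : ℝ) * x ^ m)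
      (((e + j).factorial / e.factorial : ℝ) * (x ^ j / (1 - x) ^ (e + j + 1))) := by
  have hn : ‖x‖ < 1 := by rwa [Real.norm_of_nonneg h0]
  have hs := (hasSum_choose_mul_geometric_of_norm_lt_one (e + j) hn).mul_left
    (((e + j).factorial / e.factorial : ℝ) * x ^ j)
  rw [← hasSum_nat_add_iff' j]
  have hz : ∑ i ∈ Finset.range j, (i.descFactorial j : ℝ) * ((i + e).choose e : ℝ) * x ^ i = 0 := by
    refine Finset.sum_eq_zero fun i hi => ?_
    rw [Nat.descFactorial_eq_zero_iff_lt.2 (Finset.mem_range.1 hi)]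
    simp
  rw [hz, sub_zero]
  refine hasSum_of_eq hs (fun p => ?_) ?_
  · rw [descFactorial_mul_choose, pow_add]
    ring
  · ring

/-! ### First-order condition and closed forms -/

/-- The first-order condition, multiplied by `x` so that it involves the powers `x ^ m` only. -/
lemma stationary {n : ℕ} (hn : 1 ≤ n) (e : ℕ) {t x : ℝ} (h0 : 0 < x) (h1 : x < 1)
    (hmin : IsMinOn (fun l : ℝ => Real.exp (-(l * t)) * Gpoly (e + 2) n l) (Set.Icc 0 1) x) :
    ∑ m ∈ Finset.range (n + 1),
      ((m : ℝ) - t * x) * fallProd n m * ((m + e).choose e : ℝ) * x ^ m = 0 := by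
  have hloc := hmin.isLocalMin (Icc_mem_nhds h0 h1)
  simp_rw [Gpoly_eq hn e] at hloc
  have hG : HasDerivAt (fun l : ℝ => ∑ m ∈ Finset.range (n + 1),
      fallProd n m * ((m + e).choose e : ℝ) * l ^ m)
      (∑ m ∈ Finset.range (n + 1),
        fallProd n m * ((m + e).choose e : ℝ) * ((m : ℝ) * x ^ (m - 1))) x :=
    HasDerivAt.fun_sum fun m _ => (hasDerivAt_pow m x).const_mul _
  have hE : HasDerivAt (fun l : ℝ => Real.exp (-(l * t))) (Real.exp (-(x * t)) * (-(1 * t))) x :=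
    (((hasDerivAt_id x).mul_const t).neg).exp
  have hz := hloc.hasDerivAt_eq_zero (hE.mul hG)
  have hz2 : Real.exp (-(x * t)) * ((∑ m ∈ Finset.range (n + 1),
        fallProd n m * ((m + e).choose e : ℝ) * ((m : ℝ) * x ^ (m - 1)))
        - t * ∑ m ∈ Finset.range (n + 1), fallProd n m * ((m + e).choose e : ℝ) * x ^ m) = 0 := by
    linear_combination hz
  have hz3 := (mul_eq_zero.1 hz2).resolve_left (Real.exp_pos _).ne'
  rw [Finset.mul_sum, ← Finset.sum_sub_distrib] at hz3
  have hz4 := congrArg (fun y => x * y) hz3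
  simp only [mul_zero, Finset.mul_sum] at hz4
  rw [← hz4]
  refine Finset.sum_congr rfl fun m _ => ?_
  cases m with
  | zero => simp; ring
  | succ m => simp [pow_succ]; ring

lemma hasSum_linear (e : ℕ) (t : ℝ) (ht : 0 < t) {x : ℝ} (h0 : 0 ≤ x) (h1 : x < 1) :
    HasSum (fun m : ℕ => ((m : ℝ) - t * x) * ((m + e).choose e : ℝ) * x ^ m)
      (x * t * (x - (1 - ((e : ℝ) + 1) / t)) / (1 - x) ^ (e + 2)) := by
  have a := hasSum_descFactorial e 1 h0 h1
  have b := (hasSum_descFactorial e 0 h0 h1).mul_left (t * x)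
  refine hasSum_of_eq (a.sub b) (fun m => ?_) ?_
  · simp; ring
  · have : (1 - x) ≠ 0 := by linarith
    have p2 : (e.factorial : ℝ) ≠ 0 := by positivity
    simp only [Nat.factorial_succ, add_zero]
    push_cast
    field_simp
    ring

lemma hasSum_limit (e : ℕ) (s : ℝ) {x : ℝ} (h0 : 0 ≤ x) (h1 : x < 1) :
    HasSum (fun m : ℕ => ((m : ℝ) - s) * ((m.descFactorial 2 : ℝ) / 2) *
        ((m + e).choose e : ℝ) * x ^ m)
      (((e : ℝ) + 1) * (e + 2) / 2 *
        ((e + 3) * x ^ 3 / (1 - x) ^ (e + 4) + (2 - s) * x ^ 2 / (1 - x) ^ (e + 3))) := by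
  have a := (hasSum_descFactorial e 3 h0 h1).mul_left (1 / 2 : ℝ)
  have b := (hasSum_descFactorial e 2 h0 h1).mul_left ((2 - s) / 2)
  refine hasSum_of_eq (a.add b) (fun m => ?_) ?_
  · have : (m.descFactorial 3 : ℝ) = (m - 2) * m.descFactorial 2 := by
      rw [Nat.descFactorial_succ m 2]
      rcases le_or_gt 2 m with h | h
      · push_cast [h]; ring
      · rw [Nat.descFactorial_eq_zero_iff_lt.2 h]; simp
    rw [this]; ring
  · have p2 : (e.factorial : ℝ) ≠ 0 := by positivity
    simp only [Nat.factorial_succ, show e + 3 = e + 2 + 1 from rfl, show e + 2 = e + 1 + 1 from rfl]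
    push_cast
    field_simp
    ring

/-! ### Convergence of the minimizers -/

/-- The limiting function `x ↦ exp (-x t) (1 - x)^{-d}` has `1 - d / t` as its only minimizer
on `[0, 1)`. The hypothesis is written without negative exponents. -/
lemma limit_minimizer_unique (d : ℕ) (hd : 1 ≤ d) {t x : ℝ} (ht : 0 < t) (h1 : x < 1)
    (h : 1 / (1 - x) ^ d ≤ Real.exp ((x - (1 - (d : ℝ) / t)) * t) * (1 / ((d : ℝ) / t) ^ d)) :
    x = 1 - (d : ℝ) / t := by
  have hd0 : (0 : ℝ) < d := by exact_mod_cast hd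
  have hx0 : 0 < (d : ℝ) / t := by positivity
  set r : ℝ := (1 - x) / ((d : ℝ) / t) with hr
  have hrpos : 0 < r := div_pos (by linarith) hx0
  by_contra hne
  have hr1 : r - 1 ≠ 0 := by
    intro h'
    have h2 : r = 1 := by linarith
    rw [hr, div_eq_one_iff_eq hx0.ne'] at h2
    exact hne (by linarith)
  have hlt : r < Real.exp (r - 1) := by
    have := Real.add_one_lt_exp hr1
    linarith
  have hpow : r ^ d < Real.exp (r - 1) ^ d := pow_lt_pow_left₀ hlt hrpos.le (by omega)
  have hexp : Real.exp (r - 1) ^ d = (Real.exp ((x - (1 - (d : ℝ) / t)) * t))⁻¹ := by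
    rw [← Real.exp_nat_mul, ← Real.exp_neg]
    congr 1
    rw [hr]
    field_simp
    ring
  rw [hexp, hr, div_pow] at hpow
  have hp : 0 < (1 - x) ^ d := pow_pos (by linarith) d
  have hq : 0 < ((d : ℝ) / t) ^ d := pow_pos hx0 d
  have hE := Real.exp_pos ((x - (1 - (d : ℝ) / t)) * t)
  rw [div_lt_iff₀ hq, inv_mul_eq_div, lt_div_iff₀ hE] at hpow
  rw [mul_one_div, div_le_div_iff₀ hp hq] at h
  linarith

lemma minimizer_tendsto (e : ℕ) {t : ℝ} (ht : (e : ℝ) + 1 < t) (lam : ℕ → ℝ)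
    (hmem : ∀ n : ℕ, 1 ≤ n → lam n ∈ Set.Icc (0 : ℝ) 1)
    (hmin : ∀ n : ℕ, 1 ≤ n →
      IsMinOn (fun l : ℝ => Real.exp (-(l * t)) * Gpoly (e + 2) n l) (Set.Icc 0 1) (lam n)) :
    Filter.Tendsto lam Filter.atTop (nhds (1 - ((e : ℝ) + 1) / t)) := by
  have he0 : (0 : ℝ) ≤ e := Nat.cast_nonneg e
  have htpos : 0 < t := by linarith
  have hq0 : 0 < ((e : ℝ) + 1) / t := by positivity
  have hq1 : ((e : ℝ) + 1) / t < 1 := by rwa [div_lt_one htpos]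
  set a : ℝ := 1 - ((e : ℝ) + 1) / t with ha
  have ha0 : 0 ≤ a := by linarith
  have ha1 : a < 1 := by linarith
  rw [Filter.tendsto_iff_ultrafilter]
  intro U hU
  have hU1 : ∀ᶠ n in (U : Filter ℕ), 1 ≤ n := hU (Filter.eventually_ge_atTop 1)
  have hUmem : ((U.map lam : Ultrafilter ℝ) : Filter ℝ) ≤ Filter.principal (Set.Icc 0 1) := by
    rw [Filter.le_principal_iff, Ultrafilter.coe_map]
    exact hU1.mono fun n hn => hmem n hn
  obtain ⟨x, hx, hxU⟩ := isCompact_Icc.ultrafilter_le_nhds _ hUmem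
  have hxt : Filter.Tendsto lam U (nhds x) := hxU
  suffices hxa : x = a by rwa [hxa] at hxt
  -- every partial sum of the limiting series at `x` is controlled by the value at `a`
  have key : ∀ M : ℕ, ∑ m ∈ Finset.range M, ((m + e).choose e : ℝ) * x ^ m ≤
      Real.exp ((x - a) * t) * (1 / (1 - a) ^ (e + 1)) := by
    intro M
    have hlim : Filter.Tendsto (fun n => ∑ m ∈ Finset.range M,
        fallProd n m * ((m + e).choose e : ℝ) * lam n ^ m) U
        (nhds (∑ m ∈ Finset.range M, 1 * ((m + e).choose e : ℝ) * x ^ m)) :=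
      tendsto_finsetSum _ fun m _ =>
        (((fallProd_tendsto m).mono_left hU).mul_const _).mul (hxt.pow m)
    have hlim2 : Filter.Tendsto (fun n => Real.exp ((lam n - a) * t) * (1 / (1 - a) ^ (e + 1))) U
        (nhds (Real.exp ((x - a) * t) * (1 / (1 - a) ^ (e + 1)))) :=
      (((hxt.sub_const a).mul_const t).rexp).mul_const _
    simp only [one_mul] at hlim
    refine le_of_tendsto_of_tendsto hlim hlim2 ?_
    filter_upwards [hU (Filter.eventually_ge_atTop (M + 1))] with n hnM
    have hn : 1 ≤ n := by omega
    have hl := hmem n hn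
    have hsub : ∑ m ∈ Finset.range M, fallProd n m * ((m + e).choose e : ℝ) * lam n ^ m ≤
        Gpoly (e + 2) n (lam n) := by
      rw [Gpoly_eq hn]
      refine Finset.sum_le_sum_of_subset_of_nonneg
        (Finset.range_subset_range.2 (by omega)) fun m _ _ => ?_
      have := (fallProd_mem hn m).1
      have := pow_nonneg hl.1 m
      positivity
    have hGa : Gpoly (e + 2) n a ≤ 1 / (1 - a) ^ (e + 1) := by
      have hs := hasSum_descFactorial e 0 ha0 ha1
      have p2 : (e.factorial : ℝ) ≠ 0 := by positivity
      simp only [Nat.descFactorial_zero, Nat.cast_one, one_mul, add_zero, pow_zero,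
        div_self p2] at hs
      rw [Gpoly_eq hn]
      refine le_trans (Finset.sum_le_sum fun m _ => ?_)
        (sum_le_hasSum (Finset.range (n + 1)) (fun m _ => ?_) hs)
      · have h1 := (fallProd_mem hn m).2
        have h2 := pow_nonneg ha0 m
        rw [mul_assoc]
        exact mul_le_of_le_one_left (by positivity) h1
      · have h2 := pow_nonneg ha0 m
        positivity
    have hm : Real.exp (-(lam n * t)) * Gpoly (e + 2) n (lam n) ≤
        Real.exp (-(a * t)) * Gpoly (e + 2) n a := hmin n hn ⟨ha0, ha1.le⟩
    have hm2 : Gpoly (e + 2) n (lam n) ≤ Real.exp ((lam n - a) * t) * Gpoly (e + 2) n a := by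
      have h3 := mul_le_mul_of_nonneg_left hm (Real.exp_pos (lam n * t)).le
      rw [← mul_assoc, ← mul_assoc, ← Real.exp_add, ← Real.exp_add, add_neg_cancel, Real.exp_zero,
        one_mul] at h3
      have h4 : (lam n - a) * t = lam n * t + -(a * t) := by ring
      rwa [h4]
    exact hsub.trans (hm2.trans (mul_le_mul_of_nonneg_left hGa (Real.exp_pos _).le))
  have hx1 : x < 1 := by
    refine lt_of_le_of_ne hx.2 fun hx1 => ?_
    -- at `x = 1` the partial sums are at least the number of their terms
    obtain ⟨M, hM⟩ := exists_nat_gt (Real.exp ((x - a) * t) * (1 / (1 - a) ^ (e + 1)))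
    have hge : (M : ℝ) ≤ ∑ m ∈ Finset.range M, ((m + e).choose e : ℝ) * x ^ m := by
      have : ∑ m ∈ Finset.range M, (1 : ℝ) ≤
          ∑ m ∈ Finset.range M, ((m + e).choose e : ℝ) * x ^ m := by
        refine Finset.sum_le_sum fun m _ => ?_
        rw [hx1, one_pow, mul_one]
        exact_mod_cast Nat.choose_pos (Nat.le_add_left e m)
      simpa using this
    linarith [key M]
  have hs := hasSum_descFactorial e 0 hx.1 hx1
  have p2 : (e.factorial : ℝ) ≠ 0 := by positivity
  simp only [Nat.descFactorial_zero, Nat.cast_one, one_mul, add_zero, pow_zero,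
    div_self p2] at hs
  have hfin := le_of_tendsto' hs.tendsto_sum_nat key
  have h1a : 1 - a = ((e + 1 : ℕ) : ℝ) / t := by rw [ha]; push_cast; ring
  have haa : a = 1 - ((e + 1 : ℕ) : ℝ) / t := by linarith
  rw [h1a, haa] at hfin
  rw [haa]
  exact limit_minimizer_unique (e + 1) (by omega) htpos hx1 hfin

/-! ### Rate of convergence -/

theorem minimizer_expansion (k : ℕ) (hk : 2 ≤ k) (t : ℝ) (ht : (k : ℝ) - 1 < t)
    (lam : ℕ → ℝ)
    (hmem : ∀ n : ℕ, 1 ≤ n → lam n ∈ Set.Icc (0 : ℝ) 1)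
    (hmin : ∀ n : ℕ, 1 ≤ n →
      IsMinOn (fun l : ℝ => Real.exp (-(l * t)) * Gpoly k n l) (Set.Icc 0 1) (lam n)) :
    Filter.Tendsto
      (fun n : ℕ => (n : ℝ) * (lam n - (1 - ((k : ℝ) - 1) / t)))
      Filter.atTop
      (nhds (((k : ℝ) / ((k : ℝ) - 1)) * (t - (k : ℝ) + 1))) := by
  obtain ⟨e, rfl⟩ : ∃ e, k = e + 2 := ⟨k - 2, by omega⟩
  have hk1 : ((e + 2 : ℕ) : ℝ) - 1 = (e : ℝ) + 1 := by push_cast; ring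
  rw [hk1] at ht ⊢
  have hlim := minimizer_tendsto e ht lam hmem hmin
  have he0 : (0 : ℝ) ≤ e := Nat.cast_nonneg e
  have htpos : 0 < t := by linarith
  have hq0 : 0 < ((e : ℝ) + 1) / t := by positivity
  have hq1 : ((e : ℝ) + 1) / t < 1 := by rwa [div_lt_one htpos]
  obtain ⟨a, ha⟩ : ∃ a : ℝ, a = 1 - ((e : ℝ) + 1) / t := ⟨_, rfl⟩
  rw [← ha] at hlim ⊢
  have ha0 : 0 < a := by linarith
  have ha1 : a < 1 := by linarith
  obtain ⟨b, hab, hb1⟩ := exists_between ha1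
  have hb0 : 0 < b := ha0.trans hab
  have hev : ∀ᶠ n in Filter.atTop, 1 ≤ n ∧ 0 < lam n ∧ lam n < b :=
    (Filter.eventually_ge_atTop 1).and
      ((hlim.eventually (lt_mem_nhds ha0)).and (hlim.eventually (gt_mem_nhds hab)))
  have hdct : Filter.Tendsto (fun n : ℕ => ∑' m : ℕ, ((m : ℝ) - t * lam n) *
        ((n : ℝ) * (1 - fallProd n m)) * ((m + e).choose e : ℝ) * lam n ^ m) Filter.atTop
      (nhds (∑' m : ℕ, ((m : ℝ) - t * a) * ((m.descFactorial 2 : ℝ) / 2) *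
        ((m + e).choose e : ℝ) * a ^ m)) := by
    refine tendsto_tsum_of_dominated_convergence (hasSum_limit e (-t) hb0.le hb1).summable
      (fun m => ?_) ?_
    · exact (((tendsto_const_nhds.sub (hlim.const_mul t)).mul (defect_tendsto m)).mul_const _).mul
        (hlim.pow m)
    · filter_upwards [hev] with n hn m
      obtain ⟨hn1, hl0, hlb⟩ := hn
      have hB := fallProd_mem hn1 m
      have hD0 : 0 ≤ (n : ℝ) * (1 - fallProd n m) := mul_nonneg (by positivity) (by linarith [hB.2])
      have hD1 := defect_le hn1 m
      have hm0 : (0 : ℝ) ≤ m := Nat.cast_nonneg m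
      have h1 : |(m : ℝ) - t * lam n| ≤ m - -t := by
        have : t * lam n ≤ t := mul_le_of_le_one_right htpos.le (by linarith)
        have : 0 ≤ t * lam n := by positivity
        rw [abs_le]; constructor <;> linarith
      rw [norm_mul, norm_mul, norm_mul, Real.norm_eq_abs, Real.norm_of_nonneg hD0,
        Real.norm_of_nonneg (Nat.cast_nonneg _), Real.norm_of_nonneg (pow_nonneg hl0.le m)]
      have h0 : (0 : ℝ) ≤ m - -t := by linarith
      gcongr
  rw [(hasSum_limit e (t * a) ha0.le ha1).tsum_eq] at hdct
  have hfactor : Filter.Tendsto (fun n : ℕ => (1 - lam n) ^ (e + 2) / (lam n * t)) Filter.atTop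
      (nhds ((1 - a) ^ (e + 2) / (a * t))) :=
    ((tendsto_const_nhds.sub hlim).pow _).div (hlim.mul_const t) (by positivity)
  have hprod := hdct.mul hfactor
  have hval : ((e : ℝ) + 1) * (e + 2) / 2 *
        ((e + 3) * a ^ 3 / (1 - a) ^ (e + 4) + (2 - t * a) * a ^ 2 / (1 - a) ^ (e + 3)) *
        ((1 - a) ^ (e + 2) / (a * t)) =
      ((e + 2 : ℕ) : ℝ) / ((e : ℝ) + 1) * (t - ((e + 2 : ℕ) : ℝ) + 1) := by
    obtain ⟨q, hq⟩ : ∃ q : ℝ, q = 1 - a := ⟨_, rfl⟩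
    have hqpos : 0 < q := by linarith
    have hqt : (e : ℝ) + 1 = q * t := by rw [hq, ha]; field_simp; ring
    have haq : a = 1 - q := by linarith
    have heq : (e : ℝ) = q * t - 1 := by linarith
    have hane : (1 - q) ≠ 0 := by linarith
    rw [← hq, haq]
    have hpw : q ^ (e + 4) = q ^ (e + 2) * q ^ 2 := by ring
    have hpw3 : q ^ (e + 3) = q ^ (e + 2) * q := by ring
    rw [hpw, hpw3]
    have hqe : q ^ (e + 2) ≠ 0 := by positivity
    generalize q ^ (e + 2) = Q at hqe
    push_cast
    rw [heq]
    have : q * t - 1 + 1 ≠ 0 := by rw [sub_add_cancel]; positivity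
    field_simp
    ring
  rw [hval] at hprod
  refine hprod.congr' ?_
  filter_upwards [hev] with n hn
  obtain ⟨hn1, hl0, hlb⟩ := hn
  have hl1 : lam n < 1 := hlb.trans hb1
  have hst : HasSum (fun m : ℕ => ((m : ℝ) - t * lam n) * fallProd n m *
      ((m + e).choose e : ℝ) * lam n ^ m) 0 := by
    rw [← stationary hn1 e hl0 hl1 (hmin n hn1)]
    refine hasSum_sum_of_ne_finset_zero fun m hm => ?_
    rw [fallProd_eq_zero hn1 (by simpa using hm)]
    simp
  have hsum := ((hasSum_linear e t htpos hl0.le hl1).sub hst).mul_left (n : ℝ)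
  rw [← ha] at hsum
  have hts : ∑' m : ℕ, ((m : ℝ) - t * lam n) * ((n : ℝ) * (1 - fallProd n m)) *
      ((m + e).choose e : ℝ) * lam n ^ m =
      (n : ℝ) * (lam n * t * (lam n - a) / (1 - lam n) ^ (e + 2) - 0) := by
    rw [← hsum.tsum_eq]
    congr 1
    funext m
    ring
  rw [hts]
  have h1l : 0 < 1 - lam n := by linarith
  have hpw : (1 - lam n) ^ (e + 2) ≠ 0 := by positivity
  field_simp
  ring
end
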